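/- Let q > 0 and let x, a ∈ ℝ³ be nonzero with ρ(x,a) > 1. Then for each sign ι ∈ {+1, −1} the generating functions preserve angular momentum: x × ∇_x S_ι(x,a) = ∇_a S_ι(x,a) × a, and both sides equal ((1 + ι·K′(ρ(x,a)))/2)·(x × a), where K′(s) = √(1 − 1/s). -/

import Mathlib

open scoped RealInnerProductSpace

noncomputable section

/-- Euclidean three-space. -/
abbrev R3 : Type := EuclideanSpace ℝ (Fin 3)

/-- The cross product on `ℝ³`. -/
def cross3 (x y : R3) : R3 :=
  (WithLp.equiv 2 (Fin 3 → ℝ)).symm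
    ![x 1 * y 2 - x 2 * y 1, x 2 * y 0 - x 0 * y 2, x 0 * y 1 - x 1 * y 0]

/-- `ρ(x,a) = (|a|/(2q))(|x||a| + x·a)`. -/
def rhoF (q : ℝ) (x a : R3) : ℝ := ‖a‖ / (2 * q) * (‖x‖ * ‖a‖ + ⟪x, a⟫)

/-- `K(s) = √(s(s−1)) − ln(√s + √(s−1))`. -/
def KF (s : ℝ) : ℝ := Real.sqrt (s * (s - 1)) - Real.log (Real.sqrt s + Real.sqrt (s - 1))

/-- The generating function `S_ι(x,a) = ι·(q/|a|)·K(ρ(x,a)) − (|x||a| − x·a)/2`. -/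
def Sgen (q ι : ℝ) (x a : R3) : ℝ :=
  ι * (q / ‖a‖) * KF (rhoF q x a) - (‖x‖ * ‖a‖ - ⟪x, a⟫) / 2

/-! The function `S_ι` depends on `x` and `a` only through `|x|`, `|a|` and `x·a`. Hence `∇ₓ S_ι` is
a combination of `x` and `a` in which `a` has coefficient `∂S_ι/∂(x·a)`, while `∇ₐ S_ι` is a
combination of `a` and `x` in which `x` has the same coefficient. The cross products with `x`, resp.
`a`, kill the radial parts, and `∂ρ/∂(x·a) = |a|/(2q)` turns the common coefficient into
`(1 + ι K′(ρ))/2`. -/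

section NormInner

variable {E : Type*} [NormedAddCommGroup E] [InnerProductSpace ℝ E] [CompleteSpace E]

theorem hasGradientAt_norm {x : E} (hx : x ≠ 0) :
    HasGradientAt (fun y : E => ‖y‖) (‖x‖⁻¹ • x) x := by
  have hx' : ‖x‖ ≠ 0 := norm_ne_zero_iff.2 hx
  have hsqrt := (hasStrictFDerivAt_norm_sq x).hasFDerivAt.sqrt (pow_ne_zero 2 hx')
  simp only [Real.sqrt_sq (norm_nonneg _)] at hsqrt
  refine hsqrt.congr_fderiv ?_
  ext w
  simp
  field_simp

theorem hasGradientAt_inner_right (a x : E) : HasGradientAt (fun y : E => ⟪a, y⟫) a x :=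
  (innerSL ℝ a).hasFDerivAt

theorem hasGradientAt_comp_prodMk {F : ℝ × ℝ → ℝ} {F' : ℝ × ℝ →L[ℝ] ℝ} {f g : E → ℝ} {f' g' x : E}
    (hF : HasFDerivAt F F' (f x, g x)) (hf : HasGradientAt f f' x) (hg : HasGradientAt g g' x) :
    HasGradientAt (fun y => F (f y, g y)) (F' (1, 0) • f' + F' (0, 1) • g') x := by
  refine (hF.comp x (hf.hasFDerivAt.prodMk hg.hasFDerivAt)).congr_fderiv ?_
  ext w
  have hsplit : (⟪f', w⟫, ⟪g', w⟫) = ⟪f', w⟫ • ((1, 0) : ℝ × ℝ) + ⟪g', w⟫ • ((0, 1) : ℝ × ℝ) := by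
    simp
  simp [hsplit, -Prod.smul_mk, -Prod.mk_add_mk, mul_comm]

theorem exists_gradient_norm_inner_eq {F : ℝ × ℝ → ℝ} {a x : E} {c : ℝ} (hx : x ≠ 0)
    (hF : DifferentiableAt ℝ F (‖x‖, ⟪a, x⟫))
    (hc : HasDerivAt (fun t => F (‖x‖, t)) c ⟪a, x⟫) :
    ∃ k : ℝ, gradient (fun y => F (‖y‖, ⟪a, y⟫)) x = k • x + c • a := by
  obtain ⟨F', hF'⟩ := hF
  have hc' : c = F' (0, 1) :=
    hc.unique (hF'.comp_hasDerivAt _ ((hasDerivAt_const _ ‖x‖).prodMk (hasDerivAt_id _)))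
  refine ⟨F' (1, 0) * ‖x‖⁻¹, ?_⟩
  rw [(hasGradientAt_comp_prodMk hF' (hasGradientAt_norm hx)
    (hasGradientAt_inner_right a x)).gradient, smul_smul, hc']

end NormInner

section CrossProduct

open scoped Matrix

theorem cross3_eq_crossProduct (x y : R3) : cross3 x y = WithLp.toLp 2 (x.ofLp ⨯₃ y.ofLp) := rfl

theorem cross3_smul_self_add_smul (x a : R3) (k c : ℝ) :
    cross3 x (k • x + c • a) = c • cross3 x a := by
  simp [cross3_eq_crossProduct]

theorem cross3_smul_add_smul_self (x a : R3) (k c : ℝ) :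
    cross3 (k • a + c • x) a = c • cross3 x a := by
  simp [cross3_eq_crossProduct]

variable {G : ℝ → ℝ → ℝ → ℝ} {x a : R3} {c : ℝ}

theorem cross3_gradient_left (hx : x ≠ 0)
    (hG : DifferentiableAt ℝ (fun p : ℝ × ℝ × ℝ => G p.1 p.2.1 p.2.2) (‖x‖, ‖a‖, ⟪x, a⟫))
    (hc : HasDerivAt (fun t => G ‖x‖ ‖a‖ t) c ⟪x, a⟫) :
    cross3 x (gradient (fun y => G ‖y‖ ‖a‖ ⟪y, a⟫) x) = c • cross3 x a := by
  simp only [real_inner_comm a] at hG hc ⊢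
  have hslice : DifferentiableAt ℝ (fun p : ℝ × ℝ => G p.1 ‖a‖ p.2) (‖x‖, ⟪a, x⟫) :=
    hG.comp (f := fun p : ℝ × ℝ => (p.1, ‖a‖, p.2)) (‖x‖, ⟪a, x⟫) (by fun_prop)
  obtain ⟨k, hk⟩ := exists_gradient_norm_inner_eq hx hslice hc
  rw [hk, cross3_smul_self_add_smul]

theorem cross3_gradient_right (ha : a ≠ 0)
    (hG : DifferentiableAt ℝ (fun p : ℝ × ℝ × ℝ => G p.1 p.2.1 p.2.2) (‖x‖, ‖a‖, ⟪x, a⟫))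
    (hc : HasDerivAt (fun t => G ‖x‖ ‖a‖ t) c ⟪x, a⟫) :
    cross3 (gradient (fun b => G ‖x‖ ‖b‖ ⟪x, b⟫) a) a = c • cross3 x a := by
  have hslice : DifferentiableAt ℝ (fun p : ℝ × ℝ => G ‖x‖ p.1 p.2) (‖a‖, ⟪x, a⟫) :=
    hG.comp (f := fun p : ℝ × ℝ => (‖x‖, p.1, p.2)) (‖a‖, ⟪x, a⟫) (by fun_prop)
  obtain ⟨k, hk⟩ := exists_gradient_norm_inner_eq ha hslice hc
  rw [hk, cross3_smul_add_smul_self]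

end CrossProduct

section DerivKF

variable {s : ℝ}

theorem hasDerivAt_sqrt_mul_sub_one (hs : 1 < s) :
    HasDerivAt (fun s => √(s * (s - 1))) ((2 * s - 1) / (2 * √(s * (s - 1)))) s := by
  have hs' : s * (s - 1) ≠ 0 := (mul_pos (by linarith) (by linarith)).ne'
  refine (((hasDerivAt_id s).mul ((hasDerivAt_id s).sub_const 1)).sqrt hs').congr_deriv ?_
  simp only [id, Pi.mul_apply]
  ring

theorem hasDerivAt_log_sqrt_add_sqrt_sub_one (hs : 1 < s) :
    HasDerivAt (fun s => Real.log (√s + √(s - 1))) (1 / (2 * √(s * (s - 1)))) s := by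
  have hs₀ : 0 < s := by linarith
  have hs₁ : 0 < s - 1 := by linarith
  have hu := Real.sqrt_pos.2 hs₀
  have hv := Real.sqrt_pos.2 hs₁
  refine ((((hasDerivAt_id s).sqrt hs₀.ne').add
    (((hasDerivAt_id s).sub_const 1).sqrt hs₁.ne')).log (add_pos hu hv).ne').congr_deriv ?_
  simp only [id, Pi.add_apply]
  rw [Real.sqrt_mul hs₀.le]
  field_simp
  ring

theorem hasDerivAt_KF (hs : 1 < s) : HasDerivAt KF √(1 - 1 / s) s := by
  have hs₀ : 0 < s := by linarith
  have hs₁ : 0 < s - 1 := by linarith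
  refine ((hasDerivAt_sqrt_mul_sub_one hs).sub
    (hasDerivAt_log_sqrt_add_sqrt_sub_one hs)).congr_deriv ?_
  calc (2 * s - 1) / (2 * √(s * (s - 1))) - 1 / (2 * √(s * (s - 1)))
      = (s - 1) / √(s * (s - 1)) := by ring
    _ = √((s - 1) ^ 2 / (s * (s - 1))) := by
      rw [Real.sqrt_div (sq_nonneg _), Real.sqrt_sq hs₁.le]
    _ = √(1 - 1 / s) := by
      rw [sq, mul_div_mul_right _ _ hs₁.ne', sub_div, div_self hs₀.ne']

end DerivKF

/-- The function `S_ι` in the rotation invariants `R = |x|`, `r = |a|` and `t = x·a`. -/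
def generatingProfile (q ι R r t : ℝ) : ℝ :=
  ι * (q / r) * KF (r / (2 * q) * (R * r + t)) - (R * r - t) / 2

section GeneratingProfile

variable {q R r t : ℝ}

theorem differentiableAt_generatingProfile (ι : ℝ) (hρ : 1 < r / (2 * q) * (R * r + t)) :
    DifferentiableAt ℝ (fun p : ℝ × ℝ × ℝ => generatingProfile q ι p.1 p.2.1 p.2.2) (R, r, t) := by
  have hr : r ≠ 0 := by rintro rfl; norm_num at hρ
  have hK : DifferentiableAt ℝ
      (fun p : ℝ × ℝ × ℝ => KF (p.2.1 / (2 * q) * (p.1 * p.2.1 + p.2.2))) (R, r, t) :=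
    (hasDerivAt_KF hρ).differentiableAt.comp
      (f := fun p : ℝ × ℝ × ℝ => p.2.1 / (2 * q) * (p.1 * p.2.1 + p.2.2)) (R, r, t) (by fun_prop)
  unfold generatingProfile
  fun_prop (disch := exact hr)

theorem hasDerivAt_generatingProfile (ι : ℝ) (hρ : 1 < r / (2 * q) * (R * r + t)) :
    HasDerivAt (fun t => generatingProfile q ι R r t)
      ((1 + ι * √(1 - 1 / (r / (2 * q) * (R * r + t)))) / 2) t := by
  have hq : q ≠ 0 := by rintro rfl; norm_num at hρ
  have hr : r ≠ 0 := by rintro rfl; norm_num at hρ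
  have hρ' : HasDerivAt (fun t => r / (2 * q) * (R * r + t)) (r / (2 * q)) t := by
    simpa using ((hasDerivAt_id t).const_add (R * r)).const_mul (r / (2 * q))
  have hK := ((hasDerivAt_KF hρ).comp t hρ').const_mul (ι * (q / r))
  refine (hK.sub (((hasDerivAt_id t).const_sub (R * r)).div_const 2)).congr_deriv ?_
  field_simp
  ring

end GeneratingProfile

theorem generating_function_angular_momentum_general (q ι : ℝ) (x a : R3)
    (hρ : 1 < rhoF q x a) :
    cross3 x (gradient (fun y => Sgen q ι y a) x) =
      cross3 (gradient (fun b => Sgen q ι x b) a) a ∧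
    cross3 x (gradient (fun y => Sgen q ι y a) x) =
      ((1 + ι * √(1 - 1 / rhoF q x a)) / 2) • cross3 x a := by
  have hx : x ≠ 0 := by rintro rfl; norm_num [rhoF] at hρ
  have ha : a ≠ 0 := by rintro rfl; norm_num [rhoF] at hρ
  have hdiff := differentiableAt_generatingProfile ι hρ
  have hderiv := hasDerivAt_generatingProfile ι hρ
  have hleft : cross3 x (gradient (fun y => Sgen q ι y a) x) =
      ((1 + ι * √(1 - 1 / rhoF q x a)) / 2) • cross3 x a :=
    cross3_gradient_left (G := generatingProfile q ι) hx hdiff hderiv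
  have hright : cross3 (gradient (fun b => Sgen q ι x b) a) a =
      ((1 + ι * √(1 - 1 / rhoF q x a)) / 2) • cross3 x a :=
    cross3_gradient_right (G := generatingProfile q ι) ha hdiff hderiv
  exact ⟨hleft.trans hright.symm, hleft⟩

/-- On the region `ρ(x,a) > 1` the generating functions preserve angular momentum:
`x × ∇ₓ S_ι(x,a) = ∇ₐ S_ι(x,a) × a`, and both sides equal
`((1 + ι·K′(ρ(x,a)))/2)·(x × a)` where `K′(s) = √(1 − 1/s)`. -/
theorem generating_function_angular_momentum (q : ℝ) (hq : 0 < q)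
    (ι : ℝ) (hι : ι = 1 ∨ ι = -1)
    (x a : R3) (hx : x ≠ 0) (ha : a ≠ 0) (hρ : 1 < rhoF q x a) :
    cross3 x (gradient (fun y => Sgen q ι y a) x) =
      cross3 (gradient (fun b => Sgen q ι x b) a) a ∧
    cross3 x (gradient (fun y => Sgen q ι y a) x) =
      ((1 + ι * Real.sqrt (1 - 1 / rhoF q x a)) / 2) • cross3 x a :=
  generating_function_angular_momentum_general q ι x a hρ
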